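/- (Upgrading locally uniform to uniform convergence of translates.) Let m, q ≥ 1, let Ω ⊆ ℝ^m be a convex open set and let y' ∈ Ω. Let F : T_Ω → ℂ^q be a holomorphic map such that for every compact K ⊆ Ω, the restriction of F to T_K is uniformly continuous and bounded, and suppose the restriction of F to the real hyperplane ℝ^m + iy' = {x + iy' : x ∈ ℝ^m} is almost periodic. Let (t_n) ⊆ ℝ^m and G : T_Ω → ℂ^q be such that the maps z ↦ F(z + t_n) converge to G uniformly on every compact subset of T_Ω. Then for every compact K ⊆ Ω, the maps z ↦ F(z + t_n) converge to G uniformly on the whole tube T_K. -/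

import Mathlib

/-!
Two mechanisms combine.

On the hyperplane over `y'`, almost periodicity says that the translates of `F` form a relatively
compact family for uniform convergence. Every uniform subsequential limit of `F (· + t n)` must
agree with the pointwise limit `G`, so the whole sequence converges to `G` uniformly on the
hyperplane (`AlmostPeriodicOn.tendstoUniformlyOn_of_tendsto`).

The difference of two translates is holomorphic, bounded on the tube over a compact set, and
uniformly small on the hyperplane over `y'`. Every `y ∈ K` lies on a segment in `Ω` from `y'` to the
slightly more distant point `y' + r (y - y')`, with one `r > 1` serving all of the compact set `K`
(`exists_dilation`). Complexifying this segment gives a strip, and the Hadamard three lines theorem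
(`norm_le_three_lines`) bounds the difference over `y` by `ε ^ (1 - r⁻¹) * C ^ r⁻¹`, where `ε` is the
bound over `y'` and `C` the bound on the whole tube. Hence the translates are uniformly Cauchy on
`T_K`; with pointwise convergence this is uniform convergence.
-/

open Filter

/-- The tube `T_S ⊆ ℂ^m` over a base set `S ⊆ ℝ^m`: all points whose imaginary part
(componentwise) lies in `S`. -/
def tube {m : ℕ} (S : Set (Fin m → ℝ)) : Set (Fin m → ℂ) :=
  {z | (fun i => (z i).im) ∈ S}

/-- The inclusion of a real vector `t ∈ ℝ^m` into `ℂ^m`. -/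
def realVec {m : ℕ} (t : Fin m → ℝ) : Fin m → ℂ := fun i => (t i : ℂ)

/-- Bochner's criterion: a map `F` is almost periodic on a set `S ⊆ ℂ^m` (with respect to
real translations) if every sequence of real translates has a subsequence converging
uniformly on `S`. -/
def AlmostPeriodicOn {m : ℕ} {X : Type*} [UniformSpace X]
    (F : (Fin m → ℂ) → X) (S : Set (Fin m → ℂ)) : Prop :=
  ∀ t : ℕ → (Fin m → ℝ), ∃ φ : ℕ → ℕ, StrictMono φ ∧
    ∃ G : (Fin m → ℂ) → X,
      TendstoUniformlyOn (fun k z => F (z + realVec (t (φ k)))) G atTop S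

theorem add_realVec_mem_tube {m : ℕ} {S : Set (Fin m → ℝ)} {z : Fin m → ℂ} (hz : z ∈ tube S)
    (t : Fin m → ℝ) : z + realVec t ∈ tube S := by
  simpa [tube, realVec] using hz

theorem tube_mono {m : ℕ} {S T : Set (Fin m → ℝ)} (h : S ⊆ T) : tube S ⊆ tube T :=
  fun _ hz => h hz

/-- Relative compactness of the translates upgrades pointwise to uniform convergence: otherwise
some subsequence stays away from `G`, while a further subsequence converges uniformly, necessarily
to `G`. -/
theorem AlmostPeriodicOn.tendstoUniformlyOn_of_tendsto {m : ℕ} {X : Type*} [MetricSpace X]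
    {F G : (Fin m → ℂ) → X} {S : Set (Fin m → ℂ)} (hF : AlmostPeriodicOn F S)
    {t : ℕ → (Fin m → ℝ)}
    (h : ∀ z ∈ S, Tendsto (fun n => F (z + realVec (t n))) atTop (nhds (G z))) :
    TendstoUniformlyOn (fun n z => F (z + realVec (t n))) G atTop S := by
  rw [Metric.tendstoUniformlyOn_iff]
  intro ε hε
  by_contra hcon
  obtain ⟨ψ, hψ, hbad⟩ := extraction_of_frequently_atTop (not_eventually.mp hcon)
  obtain ⟨φ, hφ, G', hG'⟩ := hF (fun n => t (ψ n))
  have hEq : ∀ z ∈ S, G' z = G z := fun z hz =>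
    tendsto_nhds_unique (hG'.tendsto_at hz)
      ((h z hz).comp (hψ.tendsto_atTop.comp hφ.tendsto_atTop))
  obtain ⟨k, hk⟩ := (Metric.tendstoUniformlyOn_iff.mp hG' ε hε).exists
  exact hbad (φ k) fun z hz => hEq z hz ▸ hk z hz

/-- The three lines theorem on the complexified segment `s ↦ y + s v`: a bound `ε` over the endpoint
`y` and a bound `C` over the whole segment interpolate over `y + θ v`. -/
theorem norm_le_three_lines {m : ℕ} {E : Type*} [NormedAddCommGroup E] [NormedSpace ℂ E]
    {Ω : Set (Fin m → ℝ)} {f : (Fin m → ℂ) → E}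
    (hf : DifferentiableOn ℂ f (tube Ω)) {y v : Fin m → ℝ}
    (hseg : ∀ s ∈ Set.Icc (0 : ℝ) 1, y + s • v ∈ Ω) {ε C : ℝ}
    (hε : ∀ z ∈ tube {y}, ‖f z‖ ≤ ε)
    (hC : ∀ s ∈ Set.Icc (0 : ℝ) 1, ∀ z ∈ tube {y + s • v}, ‖f z‖ ≤ C)
    {θ : ℝ} (hθ : θ ∈ Set.Icc (0 : ℝ) 1) {z : Fin m → ℂ} (hz : z ∈ tube {y + θ • v}) :
    ‖f z‖ ≤ ε ^ (1 - θ) * C ^ θ := by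
  -- The strip is parametrised so that `Re w` is the position on the segment and `w = θ` gives `z`.
  let p : ℂ → (Fin m → ℂ) := fun w j => z j + Complex.I * (w - θ) * v j
  have hp : ∀ w, p w ∈ tube {y + w.re • v} := by
    intro w
    have hz' : (fun i => (z i).im) = y + θ • v := hz
    change (fun i => (p w i).im) = y + w.re • v
    ext j
    have := congrFun hz' j
    simp only [Pi.add_apply, Pi.smul_apply, smul_eq_mul] at this
    simp [p, this]
    ring
  have hpθ : p θ = z := by ext j; simp [p]
  have hpd : Differentiable ℂ p := by
    rw [differentiable_pi]
    intro j
    fun_prop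
  have hd : DiffContOnCl ℂ (f ∘ p) (Complex.HadamardThreeLines.verticalStrip 0 1) := by
    apply DifferentiableOn.diffContOnCl
    rw [Complex.HadamardThreeLines.verticalStrip, Complex.closure_preimage_re,
      closure_Ioo zero_ne_one]
    exact hf.comp hpd.differentiableOn fun w hw =>
      tube_mono (Set.singleton_subset_iff.mpr (hseg _ hw)) (hp w)
  have key := Complex.HadamardThreeLines.norm_le_interp_of_mem_verticalClosedStrip₀₁' (f ∘ p)
    (z := (θ : ℂ)) (a := ε) (b := C)
    (by simpa [Complex.HadamardThreeLines.verticalClosedStrip] using hθ) hd ?_ ?_ ?_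
  · simpa [hpθ] using key
  · refine ⟨C, ?_⟩
    rintro _ ⟨w, hw, rfl⟩
    exact hC _ hw _ (hp w)
  · intro w hw
    have hw0 : w.re = 0 := hw
    exact hε _ (by simpa [hw0] using hp w)
  · intro w hw
    have hw1 : w.re = 1 := hw
    exact hC 1 (by simp) _ (hw1 ▸ hp w)

/-- A compact subset of an open set can be dilated slightly about any center without leaving the
open set. -/
theorem exists_dilation {V : Type*} [NormedAddCommGroup V] [NormedSpace ℝ V]
    {Ω K : Set V} (hΩ : IsOpen Ω) (hK : IsCompact K) (hKΩ : K ⊆ Ω) (c : V) :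
    ∃ r : ℝ, 1 < r ∧ ∀ y ∈ K, c + r • (y - c) ∈ Ω := by
  have hev : ∀ᶠ r : ℝ in nhds 1, ∀ y ∈ K, c + r • (y - c) ∈ Ω := by
    apply hK.eventually_forall_of_forall_eventually
    intro y hy
    have hcont : Continuous fun x : ℝ × V => c + x.1 • (x.2 - c) := by fun_prop
    exact hcont.continuousAt.eventually_mem (hΩ.mem_nhds (by simpa using hKΩ hy))
  obtain ⟨r, hr, hr1⟩ :=
    ((hev.filter_mono nhdsWithin_le_nhds).and (self_mem_nhdsWithin (s := Set.Ioi (1 : ℝ)))).exists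
  exact ⟨r, hr1, hr⟩

theorem exists_pos_rpow_mul_lt {a δ : ℝ} (ha : 0 < a) (hδ : 0 < δ) (B : ℝ) :
    ∃ ε : ℝ, 0 < ε ∧ ε ^ a * B < δ := by
  have hcont : Continuous fun x : ℝ => x ^ a * B :=
    (Real.continuous_rpow_const ha.le).mul continuous_const
  have hev : ∀ᶠ x : ℝ in nhds 0, x ^ a * B < δ :=
    hcont.continuousAt.eventually_lt continuousAt_const (by simpa [Real.zero_rpow ha.ne'] using hδ)
  obtain ⟨ε, hε, hε0⟩ :=
    ((hev.filter_mono nhdsWithin_le_nhds).and (self_mem_nhdsWithin (s := Set.Ioi (0 : ℝ)))).exists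
  exact ⟨ε, hε0, hε⟩

/-- Upgrading locally uniform to uniform convergence of translates: if `F : T_Ω → ℂ^q`
(`Ω ⊆ ℝ^m` convex open) is holomorphic, uniformly continuous and bounded on every `T_K`
(`K ⊆ Ω` compact), almost periodic on the hyperplane `ℝ^m + iy'` (`y' ∈ Ω`), and the
translates `z ↦ F (z + t n)` converge to `G` uniformly on every compact subset of
`T_Ω`, then the convergence is in fact uniform on every whole tube `T_K` with
`K ⊆ Ω` compact. -/
theorem uniform_convergence_of_translates
    {m q : ℕ} (hm : 1 ≤ m) (hq : 1 ≤ q)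
    (Ω : Set (Fin m → ℝ)) (hΩconv : Convex ℝ Ω) (hΩopen : IsOpen Ω)
    (y' : Fin m → ℝ) (hy' : y' ∈ Ω)
    (F : (Fin m → ℂ) → (Fin q → ℂ))
    (hFhol : DifferentiableOn ℂ F (tube Ω))
    (hFuc : ∀ K : Set (Fin m → ℝ), K ⊆ Ω → IsCompact K →
      UniformContinuousOn F (tube K))
    (hFbd : ∀ K : Set (Fin m → ℝ), K ⊆ Ω → IsCompact K →
      Bornology.IsBounded (F '' tube K))
    (hAP : AlmostPeriodicOn F (tube {y'}))
    (t : ℕ → (Fin m → ℝ)) (G : (Fin m → ℂ) → (Fin q → ℂ))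
    (hconv : ∀ S : Set (Fin m → ℂ), S ⊆ tube Ω → IsCompact S →
      TendstoUniformlyOn (fun n z => F (z + realVec (t n))) G atTop S) :
    ∀ K : Set (Fin m → ℝ), K ⊆ Ω → IsCompact K →
      TendstoUniformlyOn (fun n z => F (z + realVec (t n))) G atTop (tube K) := by
  intro K hKΩ hK
  have hpt : ∀ z ∈ tube Ω, Tendsto (fun n => F (z + realVec (t n))) atTop (nhds (G z)) :=
    fun z hz => (hconv {z} (Set.singleton_subset_iff.mpr hz) isCompact_singleton).tendsto_at rfl
  have hplane : TendstoUniformlyOn (fun n z => F (z + realVec (t n))) G atTop (tube {y'}) :=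
    hAP.tendstoUniformlyOn_of_tendsto fun z hz =>
      hpt z (tube_mono (Set.singleton_subset_iff.mpr hy') hz)
  refine UniformCauchySeqOn.tendstoUniformlyOn_of_tendsto ?_ fun z hz => hpt z (tube_mono hKΩ hz)
  obtain ⟨r, hr1, hr⟩ := exists_dilation hΩopen hK hKΩ y'
  have hr0 : 0 < r := zero_lt_one.trans hr1
  have hθ : r⁻¹ ∈ Set.Icc (0 : ℝ) 1 := ⟨by positivity, inv_le_one_of_one_le₀ hr1.le⟩
  -- `L` is the union of the segments from `y'` to the dilated points of `K`.
  let L : Set (Fin m → ℝ) :=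
    (fun x : ℝ × (Fin m → ℝ) => y' + x.1 • (r • (x.2 - y'))) '' (Set.Icc 0 1 ×ˢ K)
  have hLc : IsCompact L := (isCompact_Icc.prod hK).image (by fun_prop)
  have hseg : ∀ y ∈ K, ∀ s ∈ Set.Icc (0 : ℝ) 1, y' + s • (r • (y - y')) ∈ Ω :=
    fun y hy s hs => hΩconv.add_smul_mem hy' (hr y hy) hs
  have hLΩ : L ⊆ Ω := by
    rintro _ ⟨⟨s, y⟩, ⟨hs, hy⟩, rfl⟩
    exact hseg y hy s hs
  obtain ⟨M, hM⟩ := (hFbd L hLΩ hLc).exists_norm_le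
  rw [Metric.uniformCauchySeqOn_iff]
  intro δ hδ
  obtain ⟨ε, hε, hεδ⟩ :=
    exists_pos_rpow_mul_lt (sub_pos.mpr (inv_lt_one_of_one_lt₀ hr1)) hδ ((M + M) ^ r⁻¹)
  obtain ⟨N, hN⟩ := Metric.uniformCauchySeqOn_iff.mp hplane.uniformCauchySeqOn ε hε
  refine ⟨N, fun k hk n hn z hz => ?_⟩
  let y : Fin m → ℝ := fun i => (z i).im
  have hy : y ∈ K := hz
  have htrans : ∀ u : Fin m → ℝ, DifferentiableOn ℂ (fun z => F (z + realVec u)) (tube Ω) :=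
    fun u => hFhol.comp (by fun_prop) fun z hz => add_realVec_mem_tube hz u
  rw [dist_eq_norm]
  refine lt_of_le_of_lt ?_ hεδ
  refine norm_le_three_lines ((htrans (t k)).sub (htrans (t n))) (hseg y hy) ?_ ?_ hθ ?_
  · intro w hw
    rw [Pi.sub_apply, ← dist_eq_norm]
    exact (hN k hk n hn w hw).le
  · intro s hs w hw
    have hsL : y' + s • (r • (y - y')) ∈ L := ⟨(s, y), ⟨hs, hy⟩, rfl⟩
    have hwL : w ∈ tube L := tube_mono (Set.singleton_subset_iff.mpr hsL) hw
    exact (norm_sub_le _ _).trans (add_le_add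
      (hM _ ⟨_, add_realVec_mem_tube hwL _, rfl⟩) (hM _ ⟨_, add_realVec_mem_tube hwL _, rfl⟩))
  · change y = y' + r⁻¹ • (r • (y - y'))
    rw [inv_smul_smul₀ hr0.ne', add_sub_cancel]
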